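/- Let f₁,…,f_n be monotone non-identical linear functions that are neither colinear nor potentially identical, and let σ be a counterclockwise permutation of [n]. If β(f^{σ_k}) = β(f^{σ_{k+1}}) for some k∈{0,…,n−1} (indices of shifts mod n), then exactly one of the following holds: (i) σ_k and σ_{k+1} are minimum among all shifts of σ (β(f^{σ_k}) = min_{0≤i<n} β(f^{σ_i})) and θ(f_{σ(k+1)})+π ≡_{2π} θ(f^{σ_k}); (ii) σ_k and σ_{k+1} are maximum among all shifts of σ (β(f^{σ_k}) = max_{0≤i<n} β(f^{σ_i})) and θ(f_{σ(k+1)}) ≡_{2π} θ(f^{σ_k}). In particular the cyclic sequence (f^{σ_0},…,f^{σ_{n−1}}) is strictly unimodal: it is cyclically unimodal and any two consecutive equal values attain the minimum or the maximum. -/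

import Mathlib

/-- A linear function `x ↦ a*x + b`. -/
structure LinFun where
  a : ℝ
  b : ℝ

namespace LinFun

/-- Evaluation of a linear function. -/
def eval (f : LinFun) (x : ℝ) : ℝ := f.a * x + f.b

/-- Composition: `h.comp g` is the linear function `x ↦ h (g x)`. -/
def comp (h g : LinFun) : LinFun := ⟨h.a * g.a, h.a * g.b + h.b⟩

/-- The identical linear function `x ↦ x`. -/
def idf : LinFun := ⟨1, 0⟩

/-- `f` is the identical function (equivalently, its vector `(β f, 1 - α f)` is `(0,0)`,
i.e. its angle is `⊥`). -/
def IsId (f : LinFun) : Prop := f = idf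

/-- The Euclidean norm of the vector `(β f, 1 - α f)` associated to `f`. -/
noncomputable def vecNorm (f : LinFun) : ℝ := Real.sqrt (f.b ^ 2 + (1 - f.a) ^ 2)

/-- The polar angle in `[0, 2π)` of the vector `(β f, 1 - α f)` associated to `f`
(meaningful only when `f` is not identical). -/
noncomputable def theta (f : LinFun) : ℝ :=
  if 0 ≤ Complex.arg ⟨f.b, 1 - f.a⟩ then Complex.arg ⟨f.b, 1 - f.a⟩
  else Complex.arg ⟨f.b, 1 - f.a⟩ + 2 * Real.pi

end LinFun

/-- Congruence of angles modulo `2π`: `x ≡_{2π} y`. -/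
def Cong (x y : ℝ) : Prop := ∃ k : ℤ, x - y = 2 * Real.pi * k

/-- The set `[t1, t2]_{2π}`. -/
def Icc2pi (t1 t2 : ℝ) : Set ℝ :=
  {θ | ∃ l1 l2 : ℝ, Cong l1 t1 ∧ Cong l2 t2 ∧ 0 ≤ l2 - l1 ∧ l2 - l1 < 2 * Real.pi ∧
    θ ∈ Set.Icc l1 l2}

/-- The set `(t1, t2)_{2π}`. -/
def Ioo2pi (t1 t2 : ℝ) : Set ℝ :=
  {θ | ∃ l1 l2 : ℝ, Cong l1 t1 ∧ Cong l2 t2 ∧ 0 ≤ l2 - l1 ∧ l2 - l1 < 2 * Real.pi ∧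
    θ ∈ Set.Ioo l1 l2}

/-- Composite of a list of linear functions: `compList [g₁, …, g_m] = g_m ∘ ⋯ ∘ g₁`. -/
def compList (L : List LinFun) : LinFun := L.foldl (fun acc g => g.comp acc) LinFun.idf

/-- The list `f_{σ(1)}, …, f_{σ(n)}` (0-indexed positions). -/
def permList {n : ℕ} (f : Fin n → LinFun) (σ : Equiv.Perm (Fin n)) : List LinFun :=
  List.ofFn fun i => f (σ i)

/-- `f^σ = f_{σ(n)} ∘ ⋯ ∘ f_{σ(1)}`. -/
def permComp {n : ℕ} (f : Fin n → LinFun) (σ : Equiv.Perm (Fin n)) : LinFun :=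
  compList (permList f σ)

/-- The composite of the functions at the (0-indexed) positions `a, a+1, …, b` of `σ`:
`f_{σ(b)} ∘ ⋯ ∘ f_{σ(a)}` (in 0-indexed notation). -/
def segComp {n : ℕ} (f : Fin n → LinFun) (σ : Equiv.Perm (Fin n)) (a b : ℕ) : LinFun :=
  compList (((permList f σ).drop a).take (b + 1 - a))

/-- The composite corresponding to the `k`-shift `σ_k` of `σ`:
`f^{σ_k} = f_{σ(k)} ∘ ⋯ ∘ f_{σ(1)} ∘ f_{σ(n)} ∘ ⋯ ∘ f_{σ(k+1)}` (1-indexed notation). -/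
def shiftComp {n : ℕ} (f : Fin n → LinFun) (σ : Equiv.Perm (Fin n)) (k : ℕ) : LinFun :=
  compList ((permList f σ).rotate k)

/-- `σ` is a minimum (optimal) permutation for `f₁, …, f_n`. -/
def IsMinimum {n : ℕ} (f : Fin n → LinFun) (σ : Equiv.Perm (Fin n)) : Prop :=
  ∀ ρ : Equiv.Perm (Fin n), (permComp f σ).b ≤ (permComp f ρ).b

/-- `μ` belongs to the neighbourhood `N(σ)`: it is obtained from `σ` by swapping two
adjacent blocks of positions, `(l, …, m)` and `(m+1, …, r)` (0-indexed, `l ≤ m < r < n`). -/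
def InNbhd {n : ℕ} (σ μ : Equiv.Perm (Fin n)) : Prop :=
  ∃ (l m r : ℕ) (_ : l ≤ m) (_ : m < r) (_ : r < n),
    (∀ i : Fin n, (i.val < l ∨ r < i.val) → μ i = σ i) ∧
    (∀ i : Fin n, ∀ _ : l ≤ i.val, ∀ _ : i.val < l + r - m,
      μ i = σ ⟨i.val + m + 1 - l, by omega⟩) ∧
    (∀ i : Fin n, ∀ _ : l + r - m ≤ i.val, ∀ _ : i.val ≤ r,
      μ i = σ ⟨i.val + m - r, by omega⟩)

/-- `σ` is locally optimal for `f₁, …, f_n`. -/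
def LocallyOptimal {n : ℕ} (f : Fin n → LinFun) (σ : Equiv.Perm (Fin n)) : Prop :=
  ∀ μ : Equiv.Perm (Fin n), InNbhd σ μ → (permComp f σ).b ≤ (permComp f μ).b

/-- `σ` is counterclockwise: ignoring the identical functions, some rotation of the sequence
of angles `θ(f_{σ(1)}), …, θ(f_{σ(n)})` is nondecreasing. -/
def Counterclockwise {n : ℕ} (f : Fin n → LinFun) (σ : Equiv.Perm (Fin n)) : Prop :=
  ∃ c : ℕ, ∀ i j : Fin n, ¬ (f (σ i)).IsId → ¬ (f (σ j)).IsId →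
    ((c ≤ i.val ∧ i ≤ j) ∨ (i ≤ j ∧ j.val < c) ∨ (c ≤ i.val ∧ j.val < c)) →
    (f (σ i)).theta ≤ (f (σ j)).theta

/-- `f₁, …, f_n` are colinear: all vectors lie on one line through the origin. -/
def Colinear {n : ℕ} (f : Fin n → LinFun) : Prop :=
  ∃ lam : ℝ, ∀ i : Fin n,
    (f i).IsId ∨ Cong ((f i).theta) lam ∨ Cong ((f i).theta) (lam + Real.pi)

/-- `f₁, …, f_n` are potentially identical: some counterclockwise permutation composes
to the identical function. -/
def PotentiallyIdentical {n : ℕ} (f : Fin n → LinFun) : Prop :=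
  ∃ σ : Equiv.Perm (Fin n), Counterclockwise f σ ∧ (permComp f σ).IsId

/-- The ε-perturbation `f^{(ε)}` of a linear function. -/
noncomputable def epsPert (f : LinFun) (ε : ℝ) : LinFun := if f.a = 0 then ⟨ε, f.b⟩ else f

/-!
Passing from `G ∘ g` to `g ∘ G` changes the intercept by the determinant of `vec G` and `vec g`,
and multiplies the determinant of the composite with `g` by `α(g)`. Thus
`β(f^{σ_k}) - β(f^{σ_{k+1}})` has the sign of `sin (θ(f_{σ(k+1)}) - θ(f^{σ_k}))`, and this sign is
unchanged when `θ(f^{σ_k})` is replaced by `θ(f^{σ_{k+1}})`, an angle less than `π` away. Lift the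
angles `θ(f_{σ(k)})` to a nondecreasing real sequence gaining `2π` per turn. The lifted differences
then cross multiples of `π` only upwards and gain `2π` per turn, so `β(f^{σ_k})` is nondecreasing
along one half-turn and nonincreasing along the other; equality of neighbours means that the
difference is a multiple of `π`, where the direction changes.
-/

section Sine

open Real

lemma int_mul_pi_le_of_sign_sin_eq {x y : ℝ} {m : ℤ}
    (h : SignType.sign (sin x) = SignType.sign (sin y)) (hxy : |x - y| < π) (hx : m * π ≤ x) :
    m * π ≤ y := by
  have hsign : SignType.sign (sin (x - m * π)) = SignType.sign (sin (y - m * π)) := by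
    simp only [sin_sub_int_mul_pi, sign_mul, h]
  rw [abs_lt] at hxy
  by_contra! hy
  have hy_neg : sin (y - m * π) < 0 := sin_neg_of_neg_of_neg_pi_lt (by linarith) (by linarith)
  have hx_nonneg : 0 ≤ sin (x - m * π) := sin_nonneg_of_nonneg_of_le_pi (by linarith) (by linarith)
  rw [sign_neg hy_neg, sign_eq_neg_one_iff] at hsign
  exact hsign.not_ge hx_nonneg

lemma le_int_mul_pi_of_sign_sin_eq {x y : ℝ} {m : ℤ}
    (h : SignType.sign (sin x) = SignType.sign (sin y)) (hxy : |x - y| < π) (hy : y ≤ m * π) :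
    x ≤ m * π := by
  have hneg : ((-m : ℤ) : ℝ) * π ≤ -x :=
    int_mul_pi_le_of_sign_sin_eq (x := -y)
      (by rw [sin_neg, sin_neg, Left.sign_neg, Left.sign_neg, h])
      (by rwa [neg_sub_neg]) (by push_cast; linarith)
  push_cast at hneg
  linarith

lemma sin_nonneg_of_even {x : ℝ} {m : ℤ} (hm : Even m) (h₁ : m * π ≤ x) (h₂ : x ≤ (m + 1) * π) :
    0 ≤ sin x := by
  have h : 0 ≤ sin (x - m * π) := sin_nonneg_of_nonneg_of_le_pi (by linarith) (by linarith)
  rwa [sin_sub_int_mul_pi, hm.neg_one_zpow, one_mul] at h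

end Sine

lemma cong_iff_coe_eq {x y : ℝ} : Cong x y ↔ (x : Real.Angle) = y :=
  Real.Angle.angle_eq_iff_two_pi_dvd_sub.symm

section Sequences

open Real

lemma le_of_monotone_then_antitone {b : ℕ → ℝ} {n j i : ℕ}
    (hmono : ∀ i < j, b i ≤ b (i + 1)) (hanti : ∀ i, j ≤ i → i < n → b (i + 1) ≤ b i)
    (hn : b n = b 0) (hi : i ≤ n) : b 0 ≤ b i := by
  rcases le_total i j with hij | hji
  · exact monotoneOn_of_le_add_one Set.ordConnected_Iic (fun a _ _ ha => hmono a ha)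
      (Nat.zero_le j) hij (Nat.zero_le i)
  · rw [← hn]
    exact antitoneOn_of_add_one_le Set.ordConnected_Icc (fun a _ ha ha' => hanti a ha.1 ha'.2)
      ⟨hji, hi⟩ ⟨hji.trans hi, le_rfl⟩ hi

lemma exists_monotone_lift {n : ℕ} [NeZero n] {θ : ℕ → ℝ} (hθ : ∀ k, θ k ∈ Set.Ico 0 (2 * π))
    (hper : Function.Periodic θ n) {e : ℕ} (hle : ∀ k, ¬ n ∣ k + e + 1 → θ k ≤ θ (k + 1)) :
    ∃ T : ℕ → ℝ, Monotone T ∧ (∀ k, T (k + n) = T k + 2 * π) ∧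
      ∀ k, (T k : Real.Angle) = θ k := by
  refine ⟨fun k => θ k + ((k + e) / n : ℕ) * (2 * π), monotone_nat_of_le_succ fun k => ?_,
    fun k => ?_, fun k => ?_⟩
  · rw [add_right_comm k 1 e]
    by_cases hdvd : n ∣ k + e + 1
    · rw [Nat.succ_div_of_dvd hdvd]
      push_cast
      linarith [(hθ k).2, (hθ (k + 1)).1]
    · rw [Nat.succ_div_of_not_dvd hdvd]
      gcongr
      exact hle k hdvd
  · simp only [hper k, add_right_comm k n e, Nat.add_div_right _ (NeZero.pos n)]
    push_cast
    ring
  · rw [Real.Angle.coe_add, ← nsmul_eq_mul, Real.Angle.coe_nsmul, Real.Angle.coe_two_pi,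
      nsmul_zero, add_zero]

/-- `D` is a phase of the `n`-periodic sequence `B`: a lift to `ℝ` of angles whose sine gives the
direction in which `B` moves, and which makes one full turn per period, crossing the multiples of
`π` only upwards (`D` itself need not be monotone). -/
structure IsPhase (n : ℕ) (B D : ℕ → ℝ) : Prop where
  periodic : Function.Periodic B n
  add_period : ∀ k, D (k + n) = D k + 2 * π
  sign_sub_succ : ∀ k, SignType.sign (B k - B (k + 1)) = SignType.sign (sin (D k))
  int_mul_pi_le_succ : ∀ (m : ℤ) (k : ℕ), m * π ≤ D k → m * π ≤ D (k + 1)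
  le_int_mul_pi_of_succ : ∀ (m : ℤ) (k : ℕ), D (k + 1) ≤ m * π → D k ≤ m * π

namespace IsPhase

variable {n : ℕ} {B D : ℕ → ℝ} {m : ℤ} {i j k : ℕ}

lemma neg (h : IsPhase n B D) : IsPhase n (fun k => -B k) (fun k => D k + π) where
  periodic k := congrArg Neg.neg (h.periodic k)
  add_period k := by rw [h.add_period]; ring
  sign_sub_succ k := by
    rw [sin_add_pi, Left.sign_neg, ← h.sign_sub_succ, ← Left.sign_neg]
    congr 1
    ring
  int_mul_pi_le_succ m k hk := by
    have := h.int_mul_pi_le_succ (m - 1) k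
    push_cast at this
    linarith [this (by linarith)]
  le_int_mul_pi_of_succ m k hk := by
    have := h.le_int_mul_pi_of_succ (m - 1) k
    push_cast at this
    linarith [this (by linarith)]

lemma int_mul_pi_le (h : IsPhase n B D) (hij : i ≤ j) : m * π ≤ D i → m * π ≤ D j :=
  monotone_nat_of_le_succ (f := fun k => m * π ≤ D k) (h.int_mul_pi_le_succ m) hij

lemma le_int_mul_pi (h : IsPhase n B D) (hij : i ≤ j) : D j ≤ m * π → D i ≤ m * π :=
  antitone_nat_of_succ_le (f := fun k => D k ≤ m * π) (h.le_int_mul_pi_of_succ m) hij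

lemma succ_le_of_even (h : IsPhase n B D) (hm : Even m) (h₁ : m * π ≤ D k)
    (h₂ : D k ≤ (m + 1) * π) : B (k + 1) ≤ B k := by
  rw [← sub_nonneg, ← sign_nonneg_iff, h.sign_sub_succ, sign_nonneg_iff]
  exact sin_nonneg_of_even hm h₁ h₂

lemma le_succ_of_odd (h : IsPhase n B D) (hm : Odd m) (h₁ : m * π ≤ D k)
    (h₂ : D k ≤ (m + 1) * π) : B k ≤ B (k + 1) :=
  neg_le_neg_iff.mp <| h.neg.succ_le_of_even hm.add_one (by push_cast; linarith)
    (by push_cast; linarith)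

lemma exists_monotone_then_antitone (h : IsPhase n B D) (hm : Odd m) (hk : m * π ≤ D k)
    (hub : ∀ i < k + n, D i ≤ (m + 2) * π) :
    ∃ j ≤ n, (∀ i < j, B (k + i) ≤ B (k + i + 1)) ∧
      ∀ i, j ≤ i → i < n → B (k + i + 1) ≤ B (k + i) := by
  classical
  have hn : (m + 1 : ℤ) * π ≤ D (k + n) := by
    rw [h.add_period]; push_cast; linarith [pi_pos]
  have hex : ∃ j, (m + 1 : ℤ) * π ≤ D (k + j) := ⟨n, hn⟩
  refine ⟨Nat.find hex, Nat.find_min' hex hn, fun i hi => ?_, fun i hji hi => ?_⟩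
  · have hi' := not_le.mp (Nat.find_min hex hi)
    push_cast at hi'
    exact h.le_succ_of_odd hm (h.int_mul_pi_le (Nat.le_add_right k i) hk) hi'.le
  · refine h.succ_le_of_even hm.add_one (h.int_mul_pi_le (by gcongr) (Nat.find_spec hex)) ?_
    push_cast
    linarith [hub (k + i) (by gcongr)]

lemma exists_unimodal (h : IsPhase n B D) :
    ∃ k, ∃ j ≤ n, (∀ i < j, B (k + i) ≤ B (k + i + 1)) ∧
      ∀ i, j ≤ i → i < n → B (k + i + 1) ≤ B (k + i) := by
  classical
  obtain ⟨q, ⟨hq₀, hqn⟩, -⟩ := existsUnique_add_zsmul_mem_Ioc two_pi_pos π (D 0)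
  set m : ℤ := 2 * q + 1 with hm
  have hmπ : π + q • (2 * π) = m * π := by rw [hm, zsmul_eq_mul]; push_cast; ring
  rw [hmπ] at hq₀ hqn
  have hex : ∃ k, m * π ≤ D k := ⟨0 + n, by rwa [h.add_period]⟩
  obtain ⟨k, hk⟩ : ∃ k, Nat.find hex = k + 1 := Nat.exists_eq_succ_of_ne_zero fun h0 =>
    hq₀.not_ge (h0 ▸ Nat.find_spec hex)
  have hk_lt : D k < m * π := not_le.mp (Nat.find_min hex (by omega))
  refine ⟨k + 1, h.exists_monotone_then_antitone ⟨q, hm⟩ (hk ▸ Nat.find_spec hex) fun i hi => ?_⟩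
  have hlast : D (k + n) ≤ (m + 2 : ℤ) * π := by rw [h.add_period]; push_cast; linarith
  exact_mod_cast h.le_int_mul_pi (show i ≤ k + n by omega) hlast

lemma isMin_of_coe_eq_pi [NeZero n] (h : IsPhase n B D) (hk : (D k : Real.Angle) = π) (i : ℕ) :
    B k ≤ B i := by
  obtain ⟨q, hq⟩ := Real.Angle.angle_eq_iff_two_pi_dvd_sub.mp hk
  have hm : D k = (2 * q + 1 : ℤ) * π := by push_cast; linarith
  obtain ⟨j, -, hmono, hanti⟩ := h.exists_monotone_then_antitone ⟨q, rfl⟩ hm.ge fun i hi => by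
    have hn : D (k + n) ≤ (2 * q + 1 + 2 : ℤ) * π := by
      rw [h.add_period, hm]; push_cast; linarith
    exact_mod_cast h.le_int_mul_pi hi.le hn
  have hBk : ∀ i ≤ n, B k ≤ B (k + i) := fun i hi =>
    le_of_monotone_then_antitone (b := fun i => B (k + i)) hmono hanti (h.periodic k) hi
  -- `i + k * n` is an index congruent to `i` lying beyond `k`.
  have hki : k ≤ i + k * n := (Nat.le_mul_of_pos_right k (NeZero.pos n)).trans (Nat.le_add_left _ _)
  calc B k ≤ B (k + (i + k * n - k) % n) := hBk _ (Nat.mod_lt _ (NeZero.pos n)).le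
    _ = B (k + (i + k * n - k)) := (h.periodic.const_add k).map_mod_nat _
    _ = B i := by rw [Nat.add_sub_cancel' hki]; exact h.periodic.nat_mul k i

lemma isMax_of_coe_eq_zero [NeZero n] (h : IsPhase n B D) (hk : (D k : Real.Angle) = 0) (i : ℕ) :
    B i ≤ B k :=
  neg_le_neg_iff.mp <| h.neg.isMin_of_coe_eq_pi (by rw [Real.Angle.coe_add, hk, zero_add]) i

lemma coe_eq_zero_or_pi_of_eq_succ (h : IsPhase n B D) (hk : B k = B (k + 1)) :
    (D k : Real.Angle) = 0 ∨ (D k : Real.Angle) = π := by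
  rw [← Real.Angle.sin_eq_zero_iff, Real.Angle.sin_coe, ← _root_.sign_eq_zero_iff,
    ← h.sign_sub_succ, hk, sub_self, _root_.sign_zero]

end IsPhase

end Sequences

namespace LinFun

open Real

/-- The vector `vec(f) = (β(f), 1 - α(f))`, as a complex number so that `θ(f)` is its argument. -/
def vec (f : LinFun) : ℂ := ⟨f.b, 1 - f.a⟩

/-- The determinant of the pair `(vec(f), vec(g))`. -/
def vecDet (f g : LinFun) : ℝ := f.b * (1 - g.a) - (1 - f.a) * g.b

variable {f g G : LinFun}

lemma norm_vec (f : LinFun) : ‖f.vec‖ = f.vecNorm := Complex.norm_eq_sqrt_sq_add_sq _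

lemma vec_eq_zero_iff : f.vec = 0 ↔ f.IsId := by
  obtain ⟨a, b⟩ := f
  simp [vec, IsId, idf, Complex.ext_iff, sub_eq_zero, @eq_comm _ (1 : ℝ), and_comm]

lemma vecNorm_pos (hf : ¬ f.IsId) : 0 < f.vecNorm := by
  rwa [← norm_vec, norm_pos_iff, ne_eq, vec_eq_zero_iff]

lemma theta_eq_arg_of_a_le_one (hf : f.a ≤ 1) : f.theta = f.vec.arg :=
  if_pos (Complex.arg_nonneg_iff.mpr (sub_nonneg.mpr hf))

lemma theta_eq_arg_add_of_one_lt_a (hf : 1 < f.a) : f.theta = f.vec.arg + 2 * π :=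
  if_neg (Complex.arg_neg_iff.mpr (sub_neg.mpr hf)).not_ge

lemma coe_theta (f : LinFun) : (f.theta : Real.Angle) = (f.vec.arg : ℝ) := by
  rcases le_or_gt f.a 1 with hf | hf
  · rw [theta_eq_arg_of_a_le_one hf]
  · rw [theta_eq_arg_add_of_one_lt_a hf, Real.Angle.coe_add, Real.Angle.coe_two_pi, add_zero]

lemma theta_mem_Ico (f : LinFun) : f.theta ∈ Set.Ico 0 (2 * π) := by
  rcases le_or_gt f.a 1 with hf | hf
  · rw [theta_eq_arg_of_a_le_one hf]
    exact ⟨Complex.arg_nonneg_iff.mpr (sub_nonneg.mpr hf),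
      (Complex.arg_le_pi _).trans_lt (by linarith [pi_pos])⟩
  · have harg : f.vec.arg < 0 := Complex.arg_neg_iff.mpr (sub_neg.mpr hf)
    rw [theta_eq_arg_add_of_one_lt_a hf]
    constructor <;> linarith [Complex.neg_pi_lt_arg f.vec, pi_pos]

lemma theta_lt_pi_of_a_lt_one (hf : f.a < 1) : f.theta < π := by
  rw [theta_eq_arg_of_a_le_one hf.le, Complex.arg_lt_pi_iff]
  exact Or.inr (sub_pos.mpr hf).ne'

lemma pi_lt_theta_of_one_lt_a (hf : 1 < f.a) : π < f.theta := by
  rw [theta_eq_arg_add_of_one_lt_a hf]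
  linarith [Complex.neg_pi_lt_arg f.vec]

lemma theta_eq_of_vec_eq_mul {r : ℝ} (hr : 0 < r) (ha : f.a = g.a) (h : f.vec = r * g.vec) :
    f.theta = g.theta := by
  have harg : f.vec.arg = g.vec.arg := by rw [h, Complex.arg_real_mul _ hr]
  rcases le_or_gt f.a 1 with hf | hf
  · rw [theta_eq_arg_of_a_le_one hf, theta_eq_arg_of_a_le_one (ha ▸ hf), harg]
  · rw [theta_eq_arg_add_of_one_lt_a hf, theta_eq_arg_add_of_one_lt_a (ha ▸ hf), harg]

lemma vecNorm_mul_cos_theta (f : LinFun) : f.vecNorm * cos f.theta = f.b := by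
  rw [← Real.Angle.cos_coe, coe_theta, Real.Angle.cos_coe, ← norm_vec]
  exact Complex.norm_mul_cos_arg _

lemma vecNorm_mul_sin_theta (f : LinFun) : f.vecNorm * sin f.theta = 1 - f.a := by
  rw [← Real.Angle.sin_coe, coe_theta, Real.Angle.sin_coe, ← norm_vec]
  exact Complex.norm_mul_sin_arg _

lemma vecDet_eq_mul_sin (f g : LinFun) :
    f.vecDet g = f.vecNorm * g.vecNorm * sin (g.theta - f.theta) := by
  rw [vecDet, ← vecNorm_mul_cos_theta f, ← vecNorm_mul_cos_theta g, ← vecNorm_mul_sin_theta f,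
    ← vecNorm_mul_sin_theta g, sin_sub]
  ring

lemma sign_vecDet (hf : ¬ f.IsId) (hg : ¬ g.IsId) :
    SignType.sign (f.vecDet g) = SignType.sign (sin (g.theta - f.theta)) := by
  rw [vecDet_eq_mul_sin, sign_mul, sign_pos (mul_pos (vecNorm_pos hf) (vecNorm_pos hg)), one_mul]

lemma b_comp_sub_b_comp (G g : LinFun) : (G.comp g).b - (g.comp G).b = G.vecDet g := by
  simp only [comp, vecDet]
  ring

lemma vecDet_comp_right (G g : LinFun) : (G.comp g).vecDet g = G.vecDet g := by
  simp only [comp, vecDet]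
  ring

lemma vecDet_comp_left (G g : LinFun) : (g.comp G).vecDet g = g.a * G.vecDet g := by
  simp only [comp, vecDet]
  ring

lemma comp_assoc (f g h : LinFun) : (f.comp g).comp h = f.comp (g.comp h) := by
  simp only [comp, mk.injEq]
  constructor <;> ring

lemma IsId.comp_swap (hg : g.a ≠ 0) (h : (g.comp G).IsId) : (G.comp g).IsId := by
  simp only [IsId, comp, idf, mk.injEq] at h ⊢
  have ha : G.a * g.a = 1 := by rw [mul_comm, h.1]
  refine ⟨ha, mul_left_cancel₀ hg ?_⟩
  linear_combination g.b * h.1 + h.2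

lemma sign_sin_theta_sub_comp_swap (hg₀ : 0 < g.a) (hg : ¬ g.IsId) (hGg : ¬ (G.comp g).IsId) :
    SignType.sign (sin (g.theta - (G.comp g).theta)) =
      SignType.sign (sin (g.theta - (g.comp G).theta)) := by
  have hgG : ¬ (g.comp G).IsId := mt (IsId.comp_swap hg₀.ne') hGg
  rw [← sign_vecDet hGg hg, ← sign_vecDet hgG hg, vecDet_comp_right, vecDet_comp_left, sign_mul,
    sign_pos hg₀, one_mul]

lemma sign_b_comp_sub_b_comp (hg : ¬ g.IsId) (hGg : ¬ (G.comp g).IsId) :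
    SignType.sign ((G.comp g).b - (g.comp G).b) =
      SignType.sign (sin (g.theta - (G.comp g).theta)) := by
  rw [b_comp_sub_b_comp, ← vecDet_comp_right, sign_vecDet hGg hg]

lemma abs_theta_comp_sub_theta_comp_lt_pi (hg : 0 < g.a) :
    |(G.comp g).theta - (g.comp G).theta| < π := by
  have ha : (g.comp G).a = (G.comp g).a := mul_comm _ _
  have hGg_mem := (G.comp g).theta_mem_Ico
  have hgG_mem := (g.comp G).theta_mem_Ico
  rcases lt_trichotomy (G.comp g).a 1 with hlt | heq | hgt
  · have hGg := theta_lt_pi_of_a_lt_one hlt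
    have hgG := theta_lt_pi_of_a_lt_one (ha.trans_lt hlt)
    rw [abs_lt]
    constructor <;> linarith [hGg_mem.1, hgG_mem.1]
  · have hmul : G.a * g.a = 1 := heq
    have hvec : (g.comp G).vec = g.a * (G.comp g).vec := by
      have hb : g.a * G.b + g.b = g.a * (G.a * g.b + G.b) := by
        linear_combination -g.b * hmul
      apply Complex.ext
      · simpa [vec, comp] using hb
      · simp [vec, ha, heq]
    rw [theta_eq_of_vec_eq_mul hg ha hvec, sub_self, abs_zero]
    exact pi_pos
  · have hGg := pi_lt_theta_of_one_lt_a hgt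
    have hgG := pi_lt_theta_of_one_lt_a (ha ▸ hgt)
    rw [abs_lt]
    constructor <;> linarith [hGg_mem.2, hgG_mem.2]

end LinFun

lemma compList_append_singleton (L : List LinFun) (g : LinFun) :
    compList (L ++ [g]) = g.comp (compList L) := by
  simp [compList]

lemma compList_cons (g : LinFun) (L : List LinFun) :
    compList (g :: L) = (compList L).comp g := by
  induction L using List.reverseRecOn with
  | nil => simp [compList, LinFun.comp, LinFun.idf]
  | append_singleton L h ih =>
    rw [← List.cons_append, compList_append_singleton, ih, compList_append_singleton,
      LinFun.comp_assoc]

section Shifts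

open Real

variable {n : ℕ} {f : Fin n → LinFun} {σ : Equiv.Perm (Fin n)}

lemma length_permList : (permList f σ).length = n := List.length_ofFn

lemma periodic_shiftComp : Function.Periodic (shiftComp f σ) n := fun k => by
  have hturn : (permList f σ).rotate n = permList f σ := by
    simpa only [length_permList] using List.rotate_length (permList f σ)
  rw [shiftComp, add_comm, ← List.rotate_rotate, hturn, shiftComp]

variable [NeZero n]

/-- The `n`-periodic sequence `f_{σ(1)}, f_{σ(2)}, …`, indexed from `0`. -/
def permSeq (f : Fin n → LinFun) (σ : Equiv.Perm (Fin n)) (k : ℕ) : LinFun :=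
  f (σ (Fin.ofNat n k))

lemma permSeq_of_lt {k : ℕ} (hk : k < n) : permSeq f σ k = f (σ ⟨k, hk⟩) := by
  simp only [permSeq, Fin.ofNat, Nat.mod_eq_of_lt hk]

lemma periodic_permSeq : Function.Periodic (permSeq f σ) n := fun k => by
  simp only [permSeq, Fin.ofNat, Nat.add_mod_right]

lemma exists_shiftComp_eq_comp (f : Fin n → LinFun) (σ : Equiv.Perm (Fin n)) (k : ℕ) :
    ∃ G : LinFun, shiftComp f σ k = G.comp (permSeq f σ k) ∧
      shiftComp f σ (k + 1) = (permSeq f σ k).comp G := by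
  have hmod : k % n < (permList f σ).length :=
    (Nat.mod_lt k (NeZero.pos n)).trans_eq length_permList.symm
  have hhead : permSeq f σ k ∈ ((permList f σ).rotate k).head? := by
    rw [← List.rotate_mod, length_permList, List.head?_rotate hmod]
    simp [permList, permSeq, Fin.ofNat, Nat.mod_lt k (NeZero.pos n)]
  obtain ⟨L, hL⟩ : ∃ L, (permList f σ).rotate k = permSeq f σ k :: L :=
    ⟨_, List.eq_cons_of_mem_head? hhead⟩
  refine ⟨compList L, ?_, ?_⟩
  · rw [shiftComp, hL, compList_cons]
  · rw [shiftComp, ← List.rotate_rotate, hL, List.rotate_cons_succ, List.rotate_zero,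
      compList_append_singleton]

lemma shiftComp_not_isId (hf : ∀ i, 0 < (f i).a) (hσ : ¬ (permComp f σ).IsId) (k : ℕ) :
    ¬ (shiftComp f σ k).IsId := by
  induction k with
  | zero => rwa [shiftComp, List.rotate_zero]
  | succ k ih =>
    obtain ⟨G, hk, hk'⟩ := exists_shiftComp_eq_comp f σ k
    rw [hk] at ih
    rw [hk']
    exact mt (LinFun.IsId.comp_swap (hf _).ne') ih

lemma Counterclockwise.exists_theta_le_succ (h : Counterclockwise f σ) (hf : ∀ i, ¬ (f i).IsId) :
    ∃ e : ℕ, ∀ k, ¬ n ∣ k + e + 1 → (permSeq f σ k).theta ≤ (permSeq f σ (k + 1)).theta := by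
  obtain ⟨c, hc⟩ := h
  -- With truncated subtraction, a cut `c ≥ n` amounts to cutting between two periods.
  refine ⟨n - c, fun k hk => hc _ _ (hf _) (hf _) ?_⟩
  have hmod := Nat.mod_lt k (NeZero.pos n)
  have hkn := Nat.div_add_mod k n
  simp only [Fin.ofNat, Fin.mk_le_mk]
  rcases Nat.lt_or_ge (k % n + 1) n with hlt | hge
  · have hsucc : (k + 1) % n = k % n + 1 := by
      rw [← Nat.mod_add_mod, Nat.mod_eq_of_lt hlt]
    have hne : c ≠ k % n + 1 := fun heq =>
      hk ⟨k / n + 1, by rw [mul_add]; omega⟩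
    omega
  · have hlast : (k + 1) % n = 0 := by
      rw [← Nat.mod_add_mod, show k % n + 1 = n by omega, Nat.mod_self]
    have hc₀ : c ≠ 0 := fun heq => hk ⟨k / n + 2, by rw [mul_add]; omega⟩
    have hcn : c < n := by
      by_contra! hcn
      exact hk ⟨k / n + 1, by rw [mul_add]; omega⟩
    omega

lemma isPhase_shiftComp (hf : ∀ i, 0 < (f i).a) (hni : ∀ i, ¬ (f i).IsId)
    (hσ : ¬ (permComp f σ).IsId) {T : ℕ → ℝ} (hT : Monotone T)
    (hTn : ∀ k, T (k + n) = T k + 2 * π)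
    (hTθ : ∀ k, (T k : Real.Angle) = (permSeq f σ k).theta) :
    IsPhase n (fun k => (shiftComp f σ k).b) (fun k => T k - (shiftComp f σ k).theta) := by
  set g := permSeq f σ
  have hsin : ∀ k x, sin (T k - x) = sin ((g k).theta - x) := fun k x => by
    rw [← Real.Angle.sin_coe, Real.Angle.coe_sub, hTθ, ← Real.Angle.coe_sub, Real.Angle.sin_coe]
  have hstep : ∀ k, SignType.sign (sin (T k - (shiftComp f σ k).theta)) =
        SignType.sign (sin (T k - (shiftComp f σ (k + 1)).theta)) ∧
      |(T k - (shiftComp f σ k).theta) - (T k - (shiftComp f σ (k + 1)).theta)| < π := fun k => by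
    obtain ⟨G, hk, hk'⟩ := exists_shiftComp_eq_comp f σ k
    have hnot := shiftComp_not_isId hf hσ k
    rw [hsin, hsin, sub_sub_sub_cancel_left, abs_sub_comm]
    rw [hk] at hnot ⊢
    rw [hk']
    exact ⟨LinFun.sign_sin_theta_sub_comp_swap (hf _) (hni _) hnot,
      LinFun.abs_theta_comp_sub_theta_comp_lt_pi (hf _)⟩
  refine ⟨periodic_shiftComp.comp LinFun.b, fun k => ?_, fun k => ?_, fun m k hk => ?_,
    fun m k hk => ?_⟩
  · rw [hTn, periodic_shiftComp k]
    ring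
  · obtain ⟨G, hk, hk'⟩ := exists_shiftComp_eq_comp f σ k
    have hnot := shiftComp_not_isId hf hσ k
    rw [hsin]
    rw [hk] at hnot ⊢
    rw [hk']
    exact LinFun.sign_b_comp_sub_b_comp (hni _) hnot
  · exact (int_mul_pi_le_of_sign_sin_eq (hstep k).1 (hstep k).2 hk).trans
      (sub_le_sub_right (hT k.le_succ) _)
  · exact le_int_mul_pi_of_sign_sin_eq (hstep k).1 (hstep k).2
      ((sub_le_sub_right (hT k.le_succ) _).trans hk)

lemma Counterclockwise.exists_isPhase (h : Counterclockwise f σ) (hf : ∀ i, 0 < (f i).a)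
    (hni : ∀ i, ¬ (f i).IsId) (hσ : ¬ (permComp f σ).IsId) :
    ∃ D : ℕ → ℝ, IsPhase n (fun k => (shiftComp f σ k).b) D ∧
      ∀ k, (D k : Real.Angle) = (permSeq f σ k).theta - (shiftComp f σ k).theta := by
  obtain ⟨e, he⟩ := h.exists_theta_le_succ hni
  obtain ⟨T, hT, hTn, hTθ⟩ := exists_monotone_lift (fun k => (permSeq f σ k).theta_mem_Ico)
    (periodic_permSeq.comp LinFun.theta) he
  exact ⟨_, isPhase_shiftComp hf hni hσ hT hTn hTθ, fun k => by rw [Real.Angle.coe_sub, hTθ]⟩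

end Shifts

theorem stmt13_general {n : ℕ} (f : Fin n → LinFun) (hf : ∀ i, 0 < (f i).a)
    (hni : ∀ i, ¬ (f i).IsId) (σ : Equiv.Perm (Fin n)) (hσ : ¬ (permComp f σ).IsId)
    (hccw : Counterclockwise f σ) :
    (∀ k : ℕ, ∀ hk : k < n,
      (shiftComp f σ k).b = (shiftComp f σ (k + 1)).b →
      Xor
        ((∀ i : ℕ, i < n → (shiftComp f σ k).b ≤ (shiftComp f σ i).b) ∧
          Cong ((f (σ ⟨k, hk⟩)).theta + Real.pi) ((shiftComp f σ k).theta))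
        ((∀ i : ℕ, i < n → (shiftComp f σ i).b ≤ (shiftComp f σ k).b) ∧
          Cong ((f (σ ⟨k, hk⟩)).theta) ((shiftComp f σ k).theta))) ∧
    (∃ k m : ℕ, m ≤ n ∧
      (∀ i : ℕ, i < m →
        (shiftComp f σ (k + i)).b ≤ (shiftComp f σ (k + i + 1)).b) ∧
      (∀ i : ℕ, m ≤ i → i < n →
        (shiftComp f σ (k + i + 1)).b ≤ (shiftComp f σ (k + i)).b)) := by
  have : NeZero n := ⟨by rintro rfl; exact hσ rfl⟩
  obtain ⟨D, hD, hDθ⟩ := hccw.exists_isPhase hf hni hσ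
  refine ⟨fun k hk heq => ?_, hD.exists_unimodal⟩
  have hDk := hDθ k
  rw [permSeq_of_lt hk] at hDk
  simp only [cong_iff_coe_eq, Real.Angle.coe_add]
  rcases hD.coe_eq_zero_or_pi_of_eq_succ heq with h0 | hpi
  · have hθ := sub_eq_zero.mp (hDk.symm.trans h0)
    refine Or.inr ⟨⟨fun i _ => hD.isMax_of_coe_eq_zero h0 i, hθ⟩, fun h => ?_⟩
    exact Real.Angle.pi_ne_zero (add_eq_left.mp (h.2.trans hθ.symm))
  · have hθ : (((f (σ ⟨k, hk⟩)).theta : ℝ) : Real.Angle) + Real.pi = (shiftComp f σ k).theta := by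
      rw [sub_eq_iff_eq_add.mp (hDk.symm.trans hpi), add_right_comm, Real.Angle.coe_pi_add_coe_pi,
        zero_add]
    refine Or.inl ⟨⟨fun i _ => hD.isMin_of_coe_eq_pi hpi i, hθ⟩, fun h => ?_⟩
    exact Real.Angle.pi_ne_zero (add_eq_left.mp (hθ.trans h.2.symm))

/-- strict unimodality of the shifts of a counterclockwise permutation.
`shiftComp f σ k` is `f^{σ_k}` (shift indices read modulo `n`), and `f (σ ⟨k, _⟩)` is the
1-indexed `f_{σ(k+1)}`. -/
theorem stmt13 {n : ℕ} (f : Fin n → LinFun) (hf : ∀ i, 0 < (f i).a)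
    (hni : ∀ i, ¬ (f i).IsId) (hnc : ¬ Colinear f) (hnp : ¬ PotentiallyIdentical f)
    (σ : Equiv.Perm (Fin n)) (hccw : Counterclockwise f σ) :
    (∀ k : ℕ, ∀ hk : k < n,
      (shiftComp f σ k).b = (shiftComp f σ (k + 1)).b →
      Xor'
        ((∀ i : ℕ, i < n → (shiftComp f σ k).b ≤ (shiftComp f σ i).b) ∧
          Cong ((f (σ ⟨k, hk⟩)).theta + Real.pi) ((shiftComp f σ k).theta))
        ((∀ i : ℕ, i < n → (shiftComp f σ i).b ≤ (shiftComp f σ k).b) ∧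
          Cong ((f (σ ⟨k, hk⟩)).theta) ((shiftComp f σ k).theta))) ∧
    (∃ k m : ℕ, m ≤ n ∧
      (∀ i : ℕ, i < m →
        (shiftComp f σ (k + i)).b ≤ (shiftComp f σ (k + i + 1)).b) ∧
      (∀ i : ℕ, m ≤ i → i < n →
        (shiftComp f σ (k + i + 1)).b ≤ (shiftComp f σ (k + i)).b)) :=
  stmt13_general f hf hni σ (fun h => hnp ⟨σ, hccw, h⟩) hccw
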